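/- With Σ a complete simplicial rational fan and λ: |Σ| → ℝ piecewise ℚ-linear with λ(b_i) > −1 for all i, the weighted δ-vector δ^λ(t) := (1−t)^{d+1}(1 + Σ_{m≥1} Σ_{v ∈ mQ ∩ N} t^{ψ(v) − ⌈ψ(v)⌉ + λ(v) + m}) is a rational function in ℚ(t^{1/N}) for some positive integer N and satisfies the symmetry δ^λ(t) = t^d δ^λ(t^{-1}). -/

import Mathlib

open scoped Classical

/-- The cone spanned by the rays indexed by `σ`. -/
def coneOf (d r : ℕ) (v : Fin r → Fin d → ℤ) (σ : Finset (Fin r)) : Set (Fin d → ℝ) :=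
  {x | ∃ c : Fin r → ℝ, (∀ i, 0 ≤ c i) ∧ (∀ i ∉ σ, c i = 0) ∧
    ∀ j, x j = ∑ i, c i * (v i j : ℝ)}

/-- The monomial `t^e` with rational exponent, as a Hahn series. -/
noncomputable def tpow (e : ℚ) : HahnSeries ℚ ℚ := HahnSeries.single e 1

/-- Build a Hahn series from a coefficient function (junk value `0` if not well-founded). -/

noncomputable def mkHahn (c : ℚ → ℚ) : HahnSeries ℚ ℚ :=
  if h : (Function.support c).IsPWO then ⟨c, h⟩ else 0

/-- The coefficient function of the series `1 + ∑_{m ≥ 1} ∑_{v ∈ mQ ∩ N}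
t^{ψ(v) - ⌈ψ(v)⌉ + λ(v) + m}` defining the weighted δ-vector. -/
noncomputable def deltaCoeff (d r : ℕ) (v : Fin r → Fin d → ℤ)
    (cones : Finset (Finset (Fin r))) (ψ lam : (Fin d → ℝ) → ℝ) : ℚ → ℚ := fun e =>
  (if e = 0 then 1 else 0) +
  (Set.ncard {p : ℕ × (Fin d → ℤ) |
    1 ≤ p.1 ∧ (∃ σ ∈ cones, (fun j => (p.2 j : ℝ)) ∈ coneOf d r v σ) ∧
    ψ (fun j => (p.2 j : ℝ)) ≤ (p.1 : ℝ) ∧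
    ψ (fun j => (p.2 j : ℝ)) - ⌈ψ (fun j => (p.2 j : ℝ))⌉
      + lam (fun j => (p.2 j : ℝ)) + (p.1 : ℝ) = (e : ℝ)} : ℚ)

/-- A polynomial in `t^{1/N}`, as a Hahn series. -/
noncomputable def polyToHahn (N : ℕ) (p : Polynomial ℚ) : HahnSeries ℚ ℚ :=
  ∑ k ∈ Finset.range (p.natDegree + 1), HahnSeries.single ((k : ℚ) / N) (p.coeff k)

/-!
Multiplying `ψ + λ` by a common denominator `N` gives an integral weight `K` of the lattice points,
and `δ^λ(t) = (1 - t) ^ d * ∑ t ^ (K w / N)`, the sum being over all lattice points `w`.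

A generic direction `ξ` partitions the lattice points into half-open full-dimensional cones: `w`
belongs to the cone containing `w + ε ξ` for all small `ε > 0`. Each half-open cone is tiled by
translates of a half-open box, so `∑ X ^ K w` is a rational function with denominator
`∏ i, (1 - X ^ K (v i))` and an explicit numerator. The reflection `w ↦ ∑ i ∈ σ, v i - w` of the
box of a cone `σ` exchanges the included and excluded facets, that is, `ξ` and `-ξ`. As `ξ` and
`-ξ` compute the same series, the numerator is invariant under `X ↦ X⁻¹` up to a unit.
-/

section WeightSeries

/-! ### Weight-counting power series -/

open PowerSeries

variable {α β ι : Type*} {g : α → ℕ} {s t : Set α}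

/-- The weight `g` takes each value only finitely often on `s`; this is what makes the
generating function `weightSeries` meaningful. -/
def HasFiniteFibers (g : α → ℕ) (s : Set α) : Prop :=
  ∀ n, (s ∩ g ⁻¹' {n}).Finite

lemma HasFiniteFibers.mono (h : HasFiniteFibers g t) (hst : s ⊆ t) : HasFiniteFibers g s :=
  fun n => (h n).subset (Set.inter_subset_inter_left _ hst)

lemma HasFiniteFibers.iUnion [Finite ι] {s : ι → Set α} (h : ∀ i, HasFiniteFibers g (s i)) :
    HasFiniteFibers g (⋃ i, s i) := fun n => by
  rw [Set.iUnion_inter]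
  exact Set.finite_iUnion fun i => h i n

lemma HasFiniteFibers.finite_setOf_natCast_eq (h : HasFiniteFibers g s) (q : ℚ) :
    {x ∈ s | (g x : ℚ) = q}.Finite :=
  (h ⌊q⌋₊).subset fun x hx => ⟨hx.1, by simp [← hx.2]⟩

variable (R : Type*) [CommRing R]

/-- The generating function `∑ X ^ g x` over `x ∈ s`. A coefficient counting an infinite fibre
takes the junk value `0`, whence the hypotheses `HasFiniteFibers`. -/
noncomputable def weightSeries (g : α → ℕ) (s : Set α) : PowerSeries R :=
  PowerSeries.mk fun n => ((s ∩ g ⁻¹' {n}).ncard : R)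

lemma coeff_weightSeries (n : ℕ) :
    coeff n (weightSeries R g s) = ((s ∩ g ⁻¹' {n}).ncard : R) :=
  coeff_mk n _

lemma weightSeries_image {T : β → α} (hT : Function.Injective T) (s : Set β) :
    weightSeries R g (T '' s) = weightSeries R (g ∘ T) s := by
  ext n
  rw [coeff_weightSeries, coeff_weightSeries, ← Set.ncard_image_of_injective _ hT,
    Set.preimage_comp, Set.image_inter_preimage]

lemma weightSeries_eq_X_pow_mul {g' : α → ℕ} {k : ℕ} (h : ∀ x ∈ s, g' x = g x + k) :
    weightSeries R g' s = X ^ k * weightSeries R g s := by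
  ext n
  rw [coeff_X_pow_mul', coeff_weightSeries]
  split_ifs with hk
  · have : s ∩ g' ⁻¹' {n} = s ∩ g ⁻¹' {n - k} := by
      ext x
      simp only [Set.mem_inter_iff, Set.mem_preimage, Set.mem_singleton_iff, and_congr_right_iff]
      intro hx
      rw [h x hx]
      omega
    rw [this, coeff_weightSeries]
  · have : s ∩ g' ⁻¹' {n} = ∅ := by
      refine Set.eq_empty_of_forall_notMem fun x ⟨hx, hxn⟩ => hk ?_
      rw [Set.mem_preimage, Set.mem_singleton_iff, h x hx] at hxn
      omega
    simp [this]

variable {R}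

lemma weightSeries_sdiff (hg : HasFiniteFibers g s) (hts : t ⊆ s) :
    weightSeries R g (s \ t) = weightSeries R g s - weightSeries R g t := by
  ext n
  have hsub : t ∩ g ⁻¹' {n} ⊆ s ∩ g ⁻¹' {n} := Set.inter_subset_inter_left _ hts
  rw [map_sub, coeff_weightSeries, coeff_weightSeries, coeff_weightSeries, Set.inter_comm,
    ← Set.ncard_sdiff_add_ncard_of_subset hsub (hg n), Nat.cast_add, add_sub_cancel_right,
    Set.inter_comm, ← Set.inter_sdiff_distrib_right]

lemma weightSeries_mul_one_sub_X_pow {T : α → α} {k : ℕ} (hg : HasFiniteFibers g s)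
    (hT : Function.Injective T) (hTs : T '' s ⊆ s) (hgT : ∀ x ∈ s, g (T x) = g x + k) :
    weightSeries R g s * (1 - X ^ k) = weightSeries R g (s \ T '' s) := by
  rw [weightSeries_sdiff hg hTs, weightSeries_image R hT,
    weightSeries_eq_X_pow_mul R (g := g) (g' := g ∘ T) hgT]
  ring

lemma weightSeries_iUnion [Fintype ι] {s : ι → Set α} (hg : ∀ i, HasFiniteFibers g (s i))
    (hs : Pairwise fun i j => Disjoint (s i) (s j)) :
    weightSeries R g (⋃ i, s i) = ∑ i, weightSeries R g (s i) := by
  ext n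
  rw [map_sum, coeff_weightSeries, Set.iUnion_inter,
    Set.ncard_iUnion_of_finite (fun i => hg i n)
      fun i j hij => (hs hij).mono Set.inter_subset_left Set.inter_subset_left,
    finsum_eq_sum_of_fintype, Nat.cast_sum]
  simp only [coeff_weightSeries]

lemma weightSeries_coe_finset (s : Finset α) :
    weightSeries R g s = ∑ x ∈ s, (X : PowerSeries R) ^ g x := by
  ext n
  simp only [coeff_weightSeries, map_sum, coeff_X_pow, Finset.sum_boole]
  rw [← Set.ncard_coe_finset, Finset.coe_filter]
  congr 2
  ext x
  simp [eq_comm]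

lemma weightSeries_prod_mul_one_sub_X_pow (K : α → ℕ) {N : ℕ}
    (h : HasFiniteFibers (fun p : ℕ × α => p.1 * N + K p.2) Set.univ) :
    weightSeries R (fun p : ℕ × α => p.1 * N + K p.2) Set.univ * (1 - X ^ N) =
      weightSeries R K Set.univ := by
  have hT : Function.Injective (Prod.map Nat.succ (id : α → α)) :=
    Nat.succ_injective.prodMap Function.injective_id
  rw [weightSeries_mul_one_sub_X_pow h hT (Set.subset_univ _) fun p _ => by
    simp only [Prod.map, Nat.succ_eq_add_one, id]; ring]
  have hbase : Set.univ \ Prod.map Nat.succ (id : α → α) '' Set.univ =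
      Prod.mk 0 '' (Set.univ : Set α) := by
    ext ⟨m, w⟩
    cases m <;> simp [Prod.ext_iff]
  rw [hbase, weightSeries_image R (Prod.mk_right_injective 0)]
  congr 1
  ext w
  simp

lemma hasFiniteFibers_prod {K : α → ℕ} {N : ℕ} (hN : N ≠ 0) (h : HasFiniteFibers K Set.univ) :
    HasFiniteFibers (fun p : ℕ × α => p.1 * N + K p.2) Set.univ := fun n => by
  refine ((Set.finite_Iic n).prod ((Set.finite_Iic n).biUnion fun k _ => h k)).subset ?_
  rintro ⟨m, w⟩ ⟨-, hn⟩
  have hmn : m * N + K w = n := hn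
  have := Nat.le_mul_of_pos_right m (Nat.pos_of_ne_zero hN)
  exact ⟨by grind, Set.mem_biUnion (x := K w) (by grind) ⟨trivial, rfl⟩⟩

end WeightSeries

section HalfOpenBox

/-! ### Half-open cones and boxes -/

/-- The ray `[0, ∞)` or `(0, ∞)`, containing its endpoint according to `p`. -/
def halfOpenRay (p : Prop) : Set ℝ := if p then Set.Ici 0 else Set.Ioi 0

/-- The unit interval `[0, 1)` or `(0, 1]`, the fundamental domain of `halfOpenRay p` under
translation by `1`. -/
def halfOpenUnit (p : Prop) : Set ℝ := if p then Set.Ico 0 1 else Set.Ioc 0 1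

variable {p : Prop} {t : ℝ}

lemma mem_halfOpenRay : t ∈ halfOpenRay p ↔ 0 ≤ t ∧ (¬p → t ≠ 0) := by
  unfold halfOpenRay
  split_ifs with hp <;> simp [hp, lt_iff_le_and_ne, eq_comm]

lemma halfOpenUnit_subset_Icc : halfOpenUnit p ⊆ Set.Icc 0 1 := by
  unfold halfOpenUnit
  split_ifs
  exacts [Set.Ico_subset_Icc_self, Set.Ioc_subset_Icc_self]

lemma mem_halfOpenUnit_iff : t ∈ halfOpenUnit p ↔ t ∈ halfOpenRay p ∧ t - 1 ∉ halfOpenRay p := by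
  unfold halfOpenUnit halfOpenRay
  split_ifs <;> simp

lemma add_one_mem_halfOpenRay (ht : t ∈ halfOpenRay p) : t + 1 ∈ halfOpenRay p := by
  rw [mem_halfOpenRay] at ht ⊢
  exact ⟨by linarith, fun _ => by linarith⟩

lemma one_sub_mem_halfOpenUnit (ht : t ∈ halfOpenUnit p) : 1 - t ∈ halfOpenUnit ¬p := by
  unfold halfOpenUnit at ht ⊢
  split_ifs at ht ⊢ <;> grind

variable {ι M : Type*} [DecidableEq ι] [AddCommGroup M]

/-- In the coordinates `c`, the cone `{x | ∀ i, 0 ≤ c x i}` with its facets `c · i = 0` included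
exactly for `i ∈ J`, truncated to unit length in the directions `i ∈ T`. For `T = ∅` this is the
half-open cone, and when `T` is everything it is the half-open fundamental box. -/
def truncatedCone (c : M →+ (ι → ℝ)) (J : Set ι) (T : Finset ι) : Set M :=
  {x | ∀ i, c x i ∈ if i ∈ T then halfOpenUnit (i ∈ J) else halfOpenRay (i ∈ J)}

variable {c : M →+ (ι → ℝ)} {J : Set ι} {T : Finset ι} {g : M → ℕ} {x : M}

lemma mem_truncatedCone_empty :
    x ∈ truncatedCone c J ∅ ↔ ∀ i, c x i ∈ halfOpenRay (i ∈ J) := by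
  simp [truncatedCone]

lemma mem_truncatedCone_univ [Fintype ι] :
    x ∈ truncatedCone c J Finset.univ ↔ ∀ i, c x i ∈ halfOpenUnit (i ∈ J) := by
  simp [truncatedCone]

lemma mem_halfOpenRay_of_mem_truncatedCone (hx : x ∈ truncatedCone c J T) (i : ι) :
    c x i ∈ halfOpenRay (i ∈ J) := by
  have := hx i
  split_ifs at this
  exacts [(mem_halfOpenUnit_iff.1 this).1, this]

lemma truncatedCone_subset_empty : truncatedCone c J T ⊆ truncatedCone c J ∅ :=
  fun _ hx => mem_truncatedCone_empty.2 (mem_halfOpenRay_of_mem_truncatedCone hx)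

lemma coord_nonneg_of_mem_truncatedCone (hx : x ∈ truncatedCone c J T) (i : ι) : 0 ≤ c x i :=
  (mem_halfOpenRay.1 (mem_halfOpenRay_of_mem_truncatedCone hx i)).1

lemma coord_mem_Icc_of_mem_box [Fintype ι] (hx : x ∈ truncatedCone c J Finset.univ) (i : ι) :
    c x i ∈ Set.Icc 0 1 :=
  halfOpenUnit_subset_Icc (mem_truncatedCone_univ.1 hx i)

lemma sub_mem_box_compl [Fintype ι] {e : M} (he : c e = 1)
    (hx : x ∈ truncatedCone c J Finset.univ) : e - x ∈ truncatedCone c Jᶜ Finset.univ := by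
  refine mem_truncatedCone_univ.2 fun i => ?_
  rw [map_sub, he]
  exact one_sub_mem_halfOpenUnit (mem_truncatedCone_univ.1 hx i)

lemma truncatedCone_insert {i : ι} (hi : i ∉ T) {u : M} (hu : c u = Pi.single i 1) :
    truncatedCone c J (insert i T) = truncatedCone c J T \ (· + u) '' truncatedCone c J T := by
  ext x
  have hshift : x ∈ (· + u) '' truncatedCone c J T ↔ x - u ∈ truncatedCone c J T := by
    simp [sub_eq_add_neg]
  have hcoord (j : ι) : c (x - u) j = if j = i then c x i - 1 else c x j := by
    rcases eq_or_ne j i with rfl | hj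
    · simp [hu]
    · simp [hu, hj]
  rw [Set.mem_sdiff, hshift]
  simp only [truncatedCone, Set.mem_ofPred_eq, hcoord, Finset.mem_insert]
  grind [mem_halfOpenUnit_iff]

lemma add_mem_truncatedCone {i : ι} (hi : i ∉ T) {u : M} (hu : c u = Pi.single i 1)
    (hx : x ∈ truncatedCone c J T) : x + u ∈ truncatedCone c J T := fun j => by
  rw [map_add, hu, Pi.add_apply]
  rcases eq_or_ne j i with rfl | hj
  · rw [if_neg hi, Pi.single_eq_same]
    exact add_one_mem_halfOpenRay (mem_halfOpenRay_of_mem_truncatedCone hx j)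
  · rw [Pi.single_eq_of_ne hj, add_zero]
    exact hx j

theorem weightSeries_truncatedCone_mul_prod {R : Type*} [CommRing R] {u : ι → M} {k : ι → ℕ}
    (hg : HasFiniteFibers g (truncatedCone c J ∅)) (hu : ∀ i, c (u i) = Pi.single i 1)
    (hgu : ∀ x ∈ truncatedCone c J ∅, ∀ i, g (x + u i) = g x + k i) (T : Finset ι) :
    weightSeries R g (truncatedCone c J ∅) * ∏ i ∈ T, (1 - PowerSeries.X ^ k i) =
      weightSeries R g (truncatedCone c J T) := by
  induction T using Finset.induction with
  | empty => simp
  | insert i T hi ih =>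
    rw [Finset.prod_insert hi, mul_comm (1 - _), ← mul_assoc, ih, truncatedCone_insert hi (hu i)]
    refine weightSeries_mul_one_sub_X_pow (hg.mono truncatedCone_subset_empty)
      (add_left_injective _) ?_ fun x hx => hgu x (truncatedCone_subset_empty hx) i
    rintro _ ⟨x, hx, rfl⟩
    exact add_mem_truncatedCone hi (hu i) hx

end HalfOpenBox

section LaurentReciprocity

/-! ### Reciprocity in Laurent polynomials -/

open LaurentPolynomial Polynomial

variable {R : Type*} [CommRing R]

lemma one_sub_X_pow_ne_zero [Nontrivial R] {k : ℕ} (hk : k ≠ 0) : (1 - X ^ k : R[X]) ≠ 0 :=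
  fun h => by simpa [hk] using congrArg (eval 0) h

lemma invert_toLaurent_one_sub_X_pow (k : ℕ) :
    invert (toLaurent (1 - X ^ k : R[X])) = -T (-k) * toLaurent (1 - X ^ k : R[X]) := by
  have : (T (-k) * T k : R[T;T⁻¹]) = 1 := by rw [← T_add, neg_add_cancel, T_zero]
  simp only [map_sub, map_one, toLaurent_X_pow, invert_T]
  linear_combination -this

lemma invert_toLaurent_prod_one_sub_X_pow {ι : Type*} (s : Finset ι) (k : ι → ℕ) :
    invert (toLaurent (∏ i ∈ s, (1 - X ^ k i) : R[X])) =
      (-1) ^ s.card * T (-∑ i ∈ s, (k i : ℤ)) * toLaurent (∏ i ∈ s, (1 - X ^ k i)) := by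
  induction s using Finset.induction with
  | empty => simp
  | insert i s hi ih =>
    rw [Finset.prod_insert hi, map_mul, map_mul, ih, invert_toLaurent_one_sub_X_pow,
      Finset.card_insert_of_notMem hi, Finset.sum_insert hi, neg_add, T_add]
    ring

lemma invert_toLaurent_sum_X_pow {α : Type*} {s t : Finset α} {g : α → ℕ} (n : ℕ)
    (e : α → α) (hst : ∀ x ∈ s, e x ∈ t) (hts : ∀ x ∈ t, e x ∈ s)
    (he : Function.Involutive e) (hg : ∀ x ∈ s, g x + g (e x) = n) :
    invert (toLaurent (∑ x ∈ s, X ^ g x : R[X])) =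
      T (-n) * toLaurent (∑ x ∈ t, X ^ g x) := by
  simp only [map_sum, toLaurent_X_pow, invert_T, Finset.mul_sum, ← T_add]
  refine Finset.sum_nbij' e e hst hts (fun x _ => he x) (fun x _ => he x) fun x hx => ?_
  rw [← hg x hx]
  push_cast
  ring_nf

lemma X_pow_mul_reverse_mul_eq_iff (p q : R[X]) (m : ℕ) :
    X ^ (q.natDegree + m) * p.reverse * q = X ^ p.natDegree * p * q.reverse ↔
      T m * invert (toLaurent p) * toLaurent q = toLaurent p * invert (toLaurent q) := by
  rw [← toLaurent_injective.eq_iff]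
  simp only [map_mul, toLaurent_X_pow, toLaurent_reverse, Nat.cast_add, T_add]
  have hunit : IsUnit (T q.natDegree * T p.natDegree : R[T;T⁻¹]) := (isUnit_T _).mul (isUnit_T _)
  conv_rhs => rw [← hunit.mul_right_inj]
  constructor <;> intro h <;> linear_combination h

lemma X_pow_mul_reverse_mul_of_invert_eq {P Q : R[X]} {m d : ℕ} {s : ℤ}
    (hP : invert (toLaurent P) = (-1) ^ (m + d) * T (-s) * toLaurent P)
    (hQ : invert (toLaurent Q) = (-1) ^ m * T (-s) * toLaurent Q) (N : ℕ) :
    X ^ (Q.natDegree + d * N) * ((1 - X ^ N) ^ d * P).reverse * Q =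
      X ^ ((1 - X ^ N) ^ d * P).natDegree * ((1 - X ^ N) ^ d * P) * Q.reverse := by
  have hT : (T (d * N : ℕ) * T (d * -N) : R[T;T⁻¹]) = 1 := by
    rw [← T_add, Nat.cast_mul, mul_neg, add_neg_cancel, T_zero]
  have hsign : ((-1) ^ d * (-1) ^ (m + d) : R[T;T⁻¹]) = (-1) ^ m := by
    rw [← pow_add, add_left_comm, pow_add, Even.neg_one_pow ⟨d, rfl⟩, mul_one]
  rw [X_pow_mul_reverse_mul_eq_iff, map_mul, map_mul, map_pow, map_pow,
    invert_toLaurent_one_sub_X_pow, hP, hQ, mul_pow, neg_pow, T_pow, ← hsign]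
  linear_combination toLaurent (1 - X ^ N) ^ d * (-1) ^ d * (-1) ^ (m + d) * T (-s) *
    toLaurent P * toLaurent Q * hT

end LaurentReciprocity

section HahnSubstitution

/-! ### Power series in a fractional power of the variable -/

variable {R : Type*} [CommRing R] {N : ℕ} [NeZero N]

/-- The substitution `X ↦ t ^ (1 / N)`, from power series to Hahn series with rational
exponents. -/
noncomputable def hahnSubst (R : Type*) [CommRing R] (N : ℕ) [NeZero N] :
    PowerSeries R →+* HahnSeries ℚ R :=
  (HahnSeries.embDomainRingHom
    ((AddMonoidHom.mulRight (N : ℚ)⁻¹).comp (Nat.castAddMonoidHom ℚ))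
    (fun a b h => by simpa [NeZero.ne] using h)
    (fun a b => by simp [mul_le_mul_iff_left₀, NeZero.pos])).comp
  HahnSeries.toPowerSeries.symm.toRingHom

lemma coeff_hahnSubst_div (f : PowerSeries R) (n : ℕ) :
    (hahnSubst R N f).coeff (n / N) = PowerSeries.coeff n f := by
  rw [div_eq_mul_inv]
  exact HahnSeries.embDomain_coeff.trans HahnSeries.coeff_toPowerSeries_symm

lemma coeff_hahnSubst_eq_zero {e : ℚ} (he : ∀ n : ℕ, (n : ℚ) ≠ e * N) (f : PowerSeries R) :
    (hahnSubst R N f).coeff e = 0 := by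
  refine HahnSeries.embDomain_of_notMem_range ?_
  rintro ⟨n, rfl⟩
  refine he n ?_
  simp [NeZero.ne]

lemma coeff_hahnSubst_weightSeries {α : Type*} (g : α → ℕ) (s : Set α) (e : ℚ) :
    (hahnSubst R N (weightSeries R g s)).coeff e = ({x ∈ s | (g x : ℚ) = e * N}.ncard : R) := by
  have hN : (N : ℚ) ≠ 0 := NeZero.ne _
  by_cases he : ∃ n : ℕ, (n : ℚ) = e * N
  · obtain ⟨n, hn⟩ := he
    rw [eq_div_of_mul_eq hN hn.symm, coeff_hahnSubst_div, coeff_weightSeries]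
    congr 2
    ext x
    simp [hN]
  · push Not at he
    rw [coeff_hahnSubst_eq_zero he]
    simp [he]

lemma hahnSubst_monomial (n : ℕ) (r : R) :
    hahnSubst R N (PowerSeries.monomial n r) = HahnSeries.single ((n : ℚ) / N) r := by
  ext e
  by_cases he : ∃ k : ℕ, (k : ℚ) = e * N
  · obtain ⟨k, hk⟩ := he
    have hN : (N : ℚ) ≠ 0 := NeZero.ne _
    rw [eq_div_of_mul_eq hN hk.symm, coeff_hahnSubst_div, PowerSeries.coeff_monomial]
    simp [HahnSeries.coeff_single, div_left_inj' hN]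
  · push Not at he
    rw [coeff_hahnSubst_eq_zero he, HahnSeries.coeff_single_of_ne]
    rintro rfl
    exact he n (div_mul_cancel₀ _ (NeZero.ne _)).symm

lemma hahnSubst_X_pow_self : hahnSubst ℚ N (PowerSeries.X ^ N) = tpow 1 := by
  rw [PowerSeries.X_pow_eq, hahnSubst_monomial, div_self (NeZero.ne _), tpow]

lemma hahnSubst_coe_polynomial (p : Polynomial ℚ) : hahnSubst ℚ N p = polyToHahn N p := by
  simp only [polyToHahn, ← hahnSubst_monomial]
  rw [← map_sum]
  congr 1
  conv_lhs => rw [p.as_sum_range, ← Polynomial.coeToPowerSeries.ringHom_apply, map_sum]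
  simp only [Polynomial.coeToPowerSeries.ringHom_apply, Polynomial.coe_monomial]

lemma mkHahn_coeff (f : HahnSeries ℚ ℚ) : mkHahn f.coeff = f :=
  dif_pos f.isPWO_support'

end HahnSubstitution

section Lattice

/-! ### The lattice `ℤ ^ d` in `ℝ ^ d` -/

variable {d : ℕ} {ι : Type*}

/-- The inclusion of the lattice `ℤ ^ d` in `ℝ ^ d`. -/
def latticeVec : (Fin d → ℤ) →+ (Fin d → ℝ) := (Int.castAddHom ℝ).compLeft (Fin d)

lemma latticeVec_apply (w : Fin d → ℤ) : latticeVec w = fun j => (w j : ℝ) := rfl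

lemma latticeVec_injective : Function.Injective (latticeVec (d := d)) :=
  Int.cast_injective.comp_left

lemma finite_setOf_latticeVec_mem {s : Set (Fin d → ℝ)} (hs : IsCompact s) :
    {w : Fin d → ℤ | latticeVec w ∈ s}.Finite := by
  have : IsProperMap (latticeVec (d := d)) :=
    IsProperMap.pi_map fun _ => Int.isClosedEmbedding_coe_real.isProperMap
  exact (this.isCompact_preimage hs).finite_of_discrete

lemma finite_setOf_coord_mem_Icc [Finite ι] (e : (Fin d → ℝ) ≃ₗ[ℝ] (ι → ℝ)) (a b : ι → ℝ) :
    {w : Fin d → ℤ | e (latticeVec w) ∈ Set.Icc a b}.Finite :=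
  finite_setOf_latticeVec_mem <|
    e.toContinuousLinearEquiv.toHomeomorph.isCompact_preimage.2 isCompact_Icc

lemma exists_ratCast_eq_of_linearIndependent [Fintype ι] {u : ι → Fin d → ℤ}
    (hu : LinearIndependent ℝ fun i => latticeVec (u i)) (hcard : Fintype.card ι = d)
    {ℓ : (Fin d → ℝ) →ₗ[ℝ] ℝ} (hℓ : ∀ i, ∃ q : ℚ, ℓ (latticeVec (u i)) = q) (w : Fin d → ℤ) :
    ∃ q : ℚ, ℓ (latticeVec w) = q := by
  let incl : (Fin d → ℚ) →ₗ[ℚ] (Fin d → ℝ) := (Algebra.linearMap ℚ ℝ).compLeft (Fin d)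
  have hincl (w : Fin d → ℤ) : incl (fun j => (w j : ℚ)) = latticeVec w := by
    ext j
    simp [incl, latticeVec_apply]
  let rationalLocus : Submodule ℚ (Fin d → ℚ) :=
    (LinearMap.range (Algebra.linearMap ℚ ℝ)).comap (ℓ.restrictScalars ℚ ∘ₗ incl)
  have hmem (w : Fin d → ℤ) :
      (fun j => (w j : ℚ)) ∈ rationalLocus ↔ ∃ q : ℚ, ℓ (latticeVec w) = q := by
    simp [rationalLocus, hincl, eq_comm]
  have hspan : Submodule.span ℚ (Set.range fun i j => (u i j : ℚ)) = ⊤ := by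
    refine LinearIndependent.span_eq_top_of_card_eq_finrank' (LinearIndependent.of_comp incl ?_)
      (by simp [hcard])
    simpa only [Function.comp_def, hincl] using hu.restrict_scalars' ℚ
  have htop : rationalLocus = ⊤ := by
    rw [eq_top_iff, ← hspan, Submodule.span_le]
    rintro _ ⟨i, rfl⟩
    exact (hmem (u i)).2 (hℓ i)
  exact (hmem w).1 (htop ▸ Submodule.mem_top)

lemma exists_nat_mul_eq_intCast [Finite ι] (q : ι → ℚ) :
    ∃ N : ℕ, N ≠ 0 ∧ ∀ i, ∃ z : ℤ, (N : ℚ) * q i = z := by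
  cases nonempty_fintype ι
  refine ⟨∏ i, (q i).den, Finset.prod_ne_zero_iff.2 fun i _ => (q i).den_ne_zero, fun i => ?_⟩
  obtain ⟨m, hm⟩ := Finset.dvd_prod_of_mem (fun i => (q i).den) (Finset.mem_univ i)
  refine ⟨m * (q i).num, ?_⟩
  rw [hm]
  push_cast
  rw [← Rat.mul_den_eq_num]
  ring

lemma exists_nat_mul_linearMap_eq_intCast [Finite ι] {ℓ : ι → (Fin d → ℝ) →ₗ[ℝ] ℝ}
    (hℓ : ∀ i (w : Fin d → ℤ), ∃ q : ℚ, ℓ i (latticeVec w) = q) :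
    ∃ N : ℕ, N ≠ 0 ∧ ∀ i (w : Fin d → ℤ), ∃ z : ℤ, (N : ℝ) * ℓ i (latticeVec w) = z := by
  choose q hq using fun p : ι × Fin d => hℓ p.1 (Pi.single p.2 1)
  obtain ⟨N, hN, hNq⟩ := exists_nat_mul_eq_intCast q
  choose z hz using hNq
  refine ⟨N, hN, fun i w => ⟨∑ j, w j * z (i, j), ?_⟩⟩
  have hw : latticeVec w = ∑ j, (w j : ℝ) • latticeVec (Pi.single j 1) := by
    ext j
    simp [latticeVec_apply, Pi.single_apply]
  have hzR (p : ι × Fin d) : (N : ℝ) * q p = z p := by exact_mod_cast hz p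
  rw [hw, map_sum, Finset.mul_sum]
  push_cast
  refine Finset.sum_congr rfl fun j _ => ?_
  rw [map_smul, hq (i, j), smul_eq_mul, ← hzR]
  ring

end Lattice

section Fan

/-! ### Complete simplicial fans and piecewise linear functions -/

variable {d r : ℕ} {v : Fin r → Fin d → ℤ} {cones : Finset (Finset (Fin r))}
  {σ τ : Finset (Fin r)} {x y ξ : Fin d → ℝ} {f g : (Fin d → ℝ) → ℝ}

/-- The linear span of the cone on the rays indexed by `σ`. -/
def raySpan (v : Fin r → Fin d → ℤ) (σ : Finset (Fin r)) : Submodule ℝ (Fin d → ℝ) :=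
  Submodule.span ℝ (Set.range fun i : σ => latticeVec (v i))

/-- The rays `v i`, with the sets of rays in `cones` as cones, form a complete simplicial fan. -/
structure IsCompleteSimplicialFan (v : Fin r → Fin d → ℤ) (cones : Finset (Finset (Fin r))) :
    Prop where
  face_mem : ∀ σ ∈ cones, ∀ τ ⊆ σ, τ ∈ cones
  linearIndependent : ∀ σ ∈ cones, LinearIndependent ℝ fun i : σ => latticeVec (v i)
  inter_eq : ∀ σ ∈ cones, ∀ τ ∈ cones, coneOf d r v σ ∩ coneOf d r v τ = coneOf d r v (σ ∩ τ)
  exists_mem : ∀ x, ∃ σ ∈ cones, x ∈ coneOf d r v σ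

/-- `f` restricts to a linear function on every cone of the fan. -/
def IsPiecewiseLinear (v : Fin r → Fin d → ℤ) (cones : Finset (Finset (Fin r)))
    (f : (Fin d → ℝ) → ℝ) : Prop :=
  ∀ σ ∈ cones, ∃ ℓ : (Fin d → ℝ) →ₗ[ℝ] ℝ, ∀ x ∈ coneOf d r v σ, f x = ℓ x

lemma mem_coneOf_iff_exists_sum : x ∈ coneOf d r v σ ↔
    ∃ c : σ → ℝ, (∀ i, 0 ≤ c i) ∧ ∑ i, c i • latticeVec (v i) = x := by
  constructor
  · rintro ⟨c, hc, hcσ, hx⟩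
    refine ⟨fun i => c i, fun i => hc i, ?_⟩
    ext j
    rw [hx j, Finset.sum_coe_sort σ fun i => c i • latticeVec (v i), Finset.sum_apply]
    exact Finset.sum_subset (Finset.subset_univ _) fun i _ hi => by simp [hcσ i hi]
  · rintro ⟨c, hc, rfl⟩
    refine ⟨fun i => if hi : i ∈ σ then c ⟨i, hi⟩ else 0, fun i => ?_, fun i hi => by simp [hi],
      fun j => ?_⟩
    · dsimp only
      split_ifs
      exacts [hc _, le_rfl]
    · rw [Finset.sum_apply, ← Finset.sum_subset (Finset.subset_univ σ) (by simp +contextual),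
        ← Finset.sum_coe_sort σ]
      simp [latticeVec_apply]

lemma latticeVec_mem_coneOf {i : Fin r} (hi : i ∈ σ) : latticeVec (v i) ∈ coneOf d r v σ := by
  have hnonneg : (0 : σ → ℝ) ≤ Pi.single ⟨i, hi⟩ 1 := Pi.single_nonneg.2 zero_le_one
  exact mem_coneOf_iff_exists_sum.2 ⟨_, hnonneg, by simp [Pi.single_apply]⟩

lemma add_mem_coneOf (hx : x ∈ coneOf d r v σ) (hy : y ∈ coneOf d r v σ) :
    x + y ∈ coneOf d r v σ := by
  obtain ⟨a, ha, rfl⟩ := mem_coneOf_iff_exists_sum.1 hx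
  obtain ⟨b, hb, rfl⟩ := mem_coneOf_iff_exists_sum.1 hy
  exact mem_coneOf_iff_exists_sum.2 ⟨a + b, fun i => add_nonneg (ha i) (hb i),
    by simp [add_smul, Finset.sum_add_distrib]⟩

lemma smul_mem_coneOf {t : ℝ} (ht : 0 ≤ t) (hx : x ∈ coneOf d r v σ) :
    t • x ∈ coneOf d r v σ := by
  obtain ⟨a, ha, rfl⟩ := mem_coneOf_iff_exists_sum.1 hx
  exact mem_coneOf_iff_exists_sum.2 ⟨t • a, fun i => mul_nonneg ht (ha i),
    by simp [Finset.smul_sum, mul_smul]⟩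

lemma mem_raySpan_of_mem_coneOf (hx : x ∈ coneOf d r v σ) : x ∈ raySpan v σ := by
  obtain ⟨c, -, rfl⟩ := mem_coneOf_iff_exists_sum.1 hx
  exact Submodule.sum_mem _ fun i _ =>
    Submodule.smul_mem _ _ (Submodule.subset_span (Set.mem_range_self i))

namespace IsPiecewiseLinear

lemma add (hf : IsPiecewiseLinear v cones f) (hg : IsPiecewiseLinear v cones g) :
    IsPiecewiseLinear v cones fun x => f x + g x := fun σ hσ => by
  obtain ⟨ℓ, hℓ⟩ := hf σ hσ
  obtain ⟨m, hm⟩ := hg σ hσ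
  exact ⟨ℓ + m, fun x hx => congrArg₂ _ (hℓ x hx) (hm x hx)⟩

lemma const_mul (hf : IsPiecewiseLinear v cones f) (a : ℝ) :
    IsPiecewiseLinear v cones fun x => a * f x := fun σ hσ => by
  obtain ⟨ℓ, hℓ⟩ := hf σ hσ
  exact ⟨a • ℓ, fun x hx => congrArg _ (hℓ x hx)⟩

lemma map_add (hf : IsPiecewiseLinear v cones f) (hσ : σ ∈ cones) (hx : x ∈ coneOf d r v σ)
    (hy : y ∈ coneOf d r v σ) : f (x + y) = f x + f y := by
  obtain ⟨ℓ, hℓ⟩ := hf σ hσ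
  rw [hℓ _ (add_mem_coneOf hx hy), hℓ x hx, hℓ y hy, _root_.map_add]

lemma map_sum (hf : IsPiecewiseLinear v cones f) (hσ : σ ∈ cones) {c : σ → ℝ}
    (hc : ∀ i, 0 ≤ c i) :
    f (∑ i, c i • latticeVec (v i)) = ∑ i : σ, c i * f (latticeVec (v i)) := by
  obtain ⟨ℓ, hℓ⟩ := hf σ hσ
  rw [hℓ _ (mem_coneOf_iff_exists_sum.2 ⟨c, hc, rfl⟩), _root_.map_sum]
  refine Finset.sum_congr rfl fun i _ => ?_
  rw [map_smul, smul_eq_mul, hℓ _ (latticeVec_mem_coneOf i.2)]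

lemma map_smul_of_nonneg (hf : IsPiecewiseLinear v cones f)
    (hfan : IsCompleteSimplicialFan v cones) {t : ℝ} (ht : 0 ≤ t) (x : Fin d → ℝ) :
    f (t • x) = t * f x := by
  obtain ⟨σ, hσ, hx⟩ := hfan.exists_mem x
  obtain ⟨ℓ, hℓ⟩ := hf σ hσ
  rw [hℓ _ (smul_mem_coneOf ht hx), hℓ x hx, _root_.map_smul, smul_eq_mul]

lemma map_zero (hf : IsPiecewiseLinear v cones f) (hfan : IsCompleteSimplicialFan v cones) :
    f 0 = 0 := by
  simpa using hf.map_smul_of_nonneg hfan le_rfl 0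

lemma nonneg (hf : IsPiecewiseLinear v cones f) (hfan : IsCompleteSimplicialFan v cones)
    (hpos : ∀ i, 0 ≤ f (latticeVec (v i))) (x : Fin d → ℝ) : 0 ≤ f x := by
  obtain ⟨σ, hσ, hx⟩ := hfan.exists_mem x
  obtain ⟨c, hc, rfl⟩ := mem_coneOf_iff_exists_sum.1 hx
  rw [hf.map_sum hσ hc]
  exact Finset.sum_nonneg fun i _ => mul_nonneg (hc i) (hpos i)

lemma eq_zero_of_map_eq_zero (hf : IsPiecewiseLinear v cones f)
    (hfan : IsCompleteSimplicialFan v cones) (hpos : ∀ i, 0 < f (latticeVec (v i)))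
    (hx : f x = 0) : x = 0 := by
  obtain ⟨σ, hσ, hxσ⟩ := hfan.exists_mem x
  obtain ⟨c, hc, rfl⟩ := mem_coneOf_iff_exists_sum.1 hxσ
  rw [hf.map_sum hσ hc, Finset.sum_eq_zero_iff_of_nonneg fun i _ =>
    mul_nonneg (hc i) (hpos i).le] at hx
  refine Finset.sum_eq_zero fun i hi => ?_
  rw [(mul_eq_zero_iff_right (hpos i).ne').1 (hx i hi), zero_smul]

end IsPiecewiseLinear

/-- The cones of full dimension. -/
abbrev MaxCone (d : ℕ) {r : ℕ} (cones : Finset (Finset (Fin r))) : Type :=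
  {σ : Finset (Fin r) // σ ∈ cones ∧ σ.card = d}

/-- `ξ` lies on no hyperplane spanned by a wall of the fan. Moving from a point slightly in the
direction `ξ` then always leads to the interior of a full-dimensional cone. -/
def IsGeneric (v : Fin r → Fin d → ℤ) (cones : Finset (Finset (Fin r))) (ξ : Fin d → ℝ) : Prop :=
  ∀ τ ∈ cones, τ.card < d → ξ ∉ raySpan v τ

lemma exists_isGeneric (v : Fin r → Fin d → ℤ) (cones : Finset (Finset (Fin r))) :
    ∃ ξ, IsGeneric v cones ξ := by
  let walls : Finset (Submodule ℝ (Fin d → ℝ)) := {τ ∈ cones | τ.card < d}.image (raySpan v)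
  have htop : ⊤ ∉ walls := fun h => by
    obtain ⟨τ, hτ, hspan⟩ := Finset.mem_image.1 h
    have hle : Module.finrank ℝ (raySpan v τ) ≤ Fintype.card τ :=
      finrank_range_le_card fun i : τ => latticeVec (v i)
    rw [hspan, finrank_top, Module.finrank_fin_fun, Fintype.card_coe] at hle
    exact hle.not_gt (Finset.mem_filter.1 hτ).2
  obtain ⟨ξ, hξ⟩ :=
    (Set.ne_univ_iff_exists_notMem _).1 (Subspace.biUnion_ne_univ_of_top_notMem htop)
  refine ⟨ξ, fun τ hτ hcard h => hξ ?_⟩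
  exact Set.mem_biUnion (Finset.mem_image_of_mem _ (Finset.mem_filter.2 ⟨hτ, hcard⟩)) h

lemma IsGeneric.neg (hξ : IsGeneric v cones ξ) : IsGeneric v cones (-ξ) :=
  fun τ hτ hcard h => hξ τ hτ hcard ((raySpan v τ).neg_mem_iff.1 h)

namespace IsCompleteSimplicialFan

variable (hfan : IsCompleteSimplicialFan v cones)

/-- The rays of a full-dimensional cone, as a basis of `ℝ ^ d`. -/
noncomputable def basis (σ : MaxCone d cones) : Module.Basis σ.1 ℝ (Fin d → ℝ) :=
  basisOfLinearIndependentOfCardEqFinrank' _ (hfan.linearIndependent σ.1 σ.2.1)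
    (by rw [Fintype.card_coe, Module.finrank_fin_fun, σ.2.2])

/-- The coordinates with respect to the rays of a full-dimensional cone. -/
noncomputable def coord (σ : MaxCone d cones) : (Fin d → ℝ) ≃ₗ[ℝ] (σ.1 → ℝ) :=
  (hfan.basis σ).equivFun

variable {hfan} {σ τ : MaxCone d cones}

lemma basis_apply (i : σ.1) : hfan.basis σ i = latticeVec (v i) := by
  rw [basis, coe_basisOfLinearIndependentOfCardEqFinrank']

lemma sum_coord_smul (x : Fin d → ℝ) : ∑ i, hfan.coord σ x i • latticeVec (v i) = x := by
  simpa only [coord, basis_apply] using (hfan.basis σ).sum_equivFun x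

lemma coord_sum (c : σ.1 → ℝ) : hfan.coord σ (∑ i, c i • latticeVec (v i)) = c := by
  rw [← LinearEquiv.eq_symm_apply]
  simp only [coord, Module.Basis.equivFun_symm_apply, basis_apply]

lemma coord_latticeVec (i : σ.1) : hfan.coord σ (latticeVec (v i)) = Pi.single i 1 := by
  rw [← coord_sum (hfan := hfan) (Pi.single i 1)]
  simp [Pi.single_apply]

lemma mem_coneOf_iff : x ∈ coneOf d r v σ.1 ↔ ∀ i, 0 ≤ hfan.coord σ x i := by
  rw [mem_coneOf_iff_exists_sum]
  constructor
  · rintro ⟨c, hc, rfl⟩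
    rwa [coord_sum]
  · exact fun h => ⟨_, h, sum_coord_smul x⟩

lemma _root_.IsGeneric.coord_ne_zero (hξ : IsGeneric v cones ξ) (i : σ.1) :
    hfan.coord σ ξ i ≠ 0 := fun h0 => by
  refine hξ (σ.1.erase i) (hfan.face_mem σ.1 σ.2.1 _ (Finset.erase_subset _ _)) ?_ ?_
  · exact (Finset.card_erase_lt_of_mem i.2).trans_eq σ.2.2
  · rw [← sum_coord_smul (hfan := hfan) (σ := σ) ξ]
    refine Submodule.sum_mem _ fun j _ => ?_
    rcases eq_or_ne j i with rfl | hj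
    · simp [h0]
    · exact Submodule.smul_mem _ _ (Submodule.subset_span
        ⟨⟨j, Finset.mem_erase.2 ⟨Subtype.coe_ne_coe.2 hj, j.2⟩⟩, rfl⟩)

end IsCompleteSimplicialFan

end Fan

section Perturbation

/-! ### Decomposition into half-open cones -/

open Filter Topology

variable {d r : ℕ} {v : Fin r → Fin d → ℤ} {cones : Finset (Finset (Fin r))}
  {x ξ : Fin d → ℝ} {a b : ℝ}

lemma tendsto_add_mul_nhdsGT_zero (a b : ℝ) :
    Tendsto (fun ε => a + ε * b) (𝓝[>] 0) (𝓝 a) :=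
  (Continuous.tendsto' (by fun_prop) 0 a (by simp)).mono_left nhdsWithin_le_nhds

lemma mem_halfOpenRay_of_frequently (hb : b ≠ 0) (h : ∃ᶠ ε in 𝓝[>] 0, 0 ≤ a + ε * b) :
    a ∈ halfOpenRay (0 < b) := by
  have ha : 0 ≤ a := ge_of_tendsto_of_frequently (tendsto_add_mul_nhdsGT_zero a b) h
  refine mem_halfOpenRay.2 ⟨ha, fun hb' ha0 => ?_⟩
  obtain ⟨ε, hε, hpos⟩ := (h.and_eventually self_mem_nhdsWithin).exists
  have := mul_neg_of_pos_of_neg hpos (lt_of_le_of_ne (not_lt.1 hb') hb)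
  linarith

lemma eventually_nonneg_of_mem_halfOpenRay (ha : a ∈ halfOpenRay (0 < b)) :
    ∀ᶠ ε in 𝓝[>] 0, 0 ≤ a + ε * b := by
  obtain ⟨ha0, ha⟩ := mem_halfOpenRay.1 ha
  by_cases hb : 0 < b
  · filter_upwards [self_mem_nhdsWithin] with ε hε
    have := mul_pos (Set.mem_Ioi.1 hε) hb
    positivity
  · have hlim := (tendsto_add_mul_nhdsGT_zero a b).eventually_const_lt (ha0.lt_of_ne' (ha hb))
    filter_upwards [hlim] with ε hε using hε.le

namespace IsCompleteSimplicialFan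

variable {hfan : IsCompleteSimplicialFan v cones}

lemma card_eq_of_frequently_mem (hfan : IsCompleteSimplicialFan v cones)
    (hξ : IsGeneric v cones ξ) {σ : Finset (Fin r)} (hσ : σ ∈ cones)
    (h : ∃ᶠ ε : ℝ in 𝓝[>] 0, x + ε • ξ ∈ coneOf d r v σ) : σ.card = d := by
  obtain ⟨ε, hε, hε0 : 0 < ε⟩ := (h.and_eventually self_mem_nhdsWithin).exists
  obtain ⟨δ, hδ, hδε⟩ := (h.and_eventually (Ioo_mem_nhdsGT hε0)).exists
  have hspan : ξ ∈ raySpan v σ := by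
    have := (raySpan v σ).sub_mem (mem_raySpan_of_mem_coneOf hε) (mem_raySpan_of_mem_coneOf hδ)
    rwa [add_sub_add_left_eq_sub, ← sub_smul,
      (raySpan v σ).smul_mem_iff (sub_pos.2 hδε.2).ne'] at this
  have hle := (hfan.linearIndependent σ hσ).fintype_card_le_finrank
  rw [Fintype.card_coe, Module.finrank_fin_fun] at hle
  exact hle.eq_of_not_lt fun hlt => hξ σ hσ hlt hspan

lemma exists_frequently_mem (hfan : IsCompleteSimplicialFan v cones)
    (hξ : IsGeneric v cones ξ) (x : Fin d → ℝ) :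
    ∃ σ : MaxCone d cones, ∃ᶠ ε : ℝ in 𝓝[>] 0, x + ε • ξ ∈ coneOf d r v σ.1 := by
  obtain ⟨σ, hσ, h⟩ : ∃ σ ∈ cones, ∃ᶠ ε : ℝ in 𝓝[>] 0, x + ε • ξ ∈ coneOf d r v σ := by
    by_contra! hnone
    obtain ⟨ε, hε⟩ := ((eventually_all_finset cones).2 hnone).exists
    obtain ⟨σ, hσ, hmem⟩ := hfan.exists_mem (x + ε • ξ)
    exact hε σ hσ hmem
  exact ⟨⟨σ, hσ, hfan.card_eq_of_frequently_mem hξ hσ h⟩, h⟩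

variable (hfan) in
/-- The facets of a full-dimensional cone which are crossed inwards in direction `ξ`. These are the
facets to be kept for the half-open cones to partition the space. -/
def inwardFacets (ξ : Fin d → ℝ) (σ : MaxCone d cones) : Set σ.1 := {i | 0 < hfan.coord σ ξ i}

variable (hfan) in
/-- The coordinates of lattice points with respect to the rays of a full-dimensional cone. -/
noncomputable def latticeCoord (σ : MaxCone d cones) : (Fin d → ℤ) →+ (σ.1 → ℝ) :=
  (hfan.coord σ).toLinearMap.toAddMonoidHom.comp latticeVec

variable {σ τ : MaxCone d cones} {w : Fin d → ℤ}

lemma latticeCoord_apply : hfan.latticeCoord σ w = hfan.coord σ (latticeVec w) := rfl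

lemma latticeCoord_ray (i : σ.1) : hfan.latticeCoord σ (v i) = Pi.single i 1 := coord_latticeVec i

variable (hfan) in
/-- The lattice points of a full-dimensional cone from which moving slightly in direction `ξ`
leads into the cone, with coordinates in the directions of `T` truncated to unit length. -/
def halfOpenCone (ξ : Fin d → ℝ) (σ : MaxCone d cones) (T : Finset σ.1) : Set (Fin d → ℤ) :=
  truncatedCone (hfan.latticeCoord σ) (hfan.inwardFacets ξ σ) T

lemma mem_halfOpenCone_of_frequently_mem (hξ : IsGeneric v cones ξ)
    (h : ∃ᶠ ε : ℝ in 𝓝[>] 0, latticeVec w + ε • ξ ∈ coneOf d r v σ.1) :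
    w ∈ hfan.halfOpenCone ξ σ ∅ :=
  mem_truncatedCone_empty.2 fun i =>
    mem_halfOpenRay_of_frequently (hξ.coord_ne_zero i) <| h.mono fun ε hε => by
      simpa [latticeCoord_apply] using mem_coneOf_iff.1 hε i

lemma eventually_mem_of_mem_halfOpenCone (h : w ∈ hfan.halfOpenCone ξ σ ∅) :
    ∀ᶠ ε : ℝ in 𝓝[>] 0, latticeVec w + ε • ξ ∈ coneOf d r v σ.1 := by
  have hcoord := eventually_all.2 fun i =>
    eventually_nonneg_of_mem_halfOpenRay (mem_truncatedCone_empty.1 h i)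
  filter_upwards [hcoord] with ε hε
  exact mem_coneOf_iff.2 fun i => by simpa [latticeCoord_apply] using hε i

lemma mem_coneOf_of_mem_halfOpenCone {T : Finset σ.1} (h : w ∈ hfan.halfOpenCone ξ σ T) :
    latticeVec w ∈ coneOf d r v σ.1 :=
  mem_coneOf_iff.2 (coord_nonneg_of_mem_truncatedCone h)

lemma iUnion_halfOpenCone (hξ : IsGeneric v cones ξ) :
    ⋃ σ, hfan.halfOpenCone ξ σ ∅ = Set.univ := by
  refine Set.eq_univ_of_forall fun w => ?_
  obtain ⟨σ, h⟩ := hfan.exists_frequently_mem hξ (latticeVec w)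
  exact Set.mem_iUnion.2 ⟨σ, mem_halfOpenCone_of_frequently_mem hξ h⟩

lemma pairwise_disjoint_halfOpenCone (hξ : IsGeneric v cones ξ) :
    Pairwise fun σ τ => Disjoint (hfan.halfOpenCone ξ σ ∅) (hfan.halfOpenCone ξ τ ∅) := by
  refine fun σ τ hne => Set.disjoint_left.2 fun w hσ hτ => hne ?_
  have hev : ∀ᶠ ε : ℝ in 𝓝[>] 0, latticeVec w + ε • ξ ∈ coneOf d r v (σ.1 ∩ τ.1) := by
    filter_upwards [eventually_mem_of_mem_halfOpenCone hσ, eventually_mem_of_mem_halfOpenCone hτ]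
      with ε hεσ hετ
    exact (hfan.inter_eq σ.1 σ.2.1 τ.1 τ.2.1).subset ⟨hεσ, hετ⟩
  have hcard := hfan.card_eq_of_frequently_mem hξ
    (hfan.face_mem σ.1 σ.2.1 _ Finset.inter_subset_left) hev.frequently
  have hσ_eq := Finset.eq_of_subset_of_card_le (Finset.inter_subset_left (s₁ := σ.1) (s₂ := τ.1))
    (by rw [hcard, σ.2.2])
  have hτ_eq := Finset.eq_of_subset_of_card_le (Finset.inter_subset_right (s₁ := σ.1) (s₂ := τ.1))
    (by rw [hcard, τ.2.2])
  exact Subtype.ext (hσ_eq.symm.trans hτ_eq)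

lemma exists_maxCone_mem (hfan : IsCompleteSimplicialFan v cones) (w : Fin d → ℤ) :
    ∃ σ : MaxCone d cones, latticeVec w ∈ coneOf d r v σ.1 := by
  obtain ⟨ξ, hξ⟩ := exists_isGeneric v cones
  obtain ⟨σ, hσ⟩ := Set.mem_iUnion.1 ((iUnion_halfOpenCone (hfan := hfan) hξ).ge (Set.mem_univ w))
  exact ⟨σ, mem_coneOf_of_mem_halfOpenCone hσ⟩

lemma inwardFacets_neg (hξ : IsGeneric v cones ξ) :
    hfan.inwardFacets (-ξ) σ = (hfan.inwardFacets ξ σ)ᶜ := by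
  ext i
  simp [inwardFacets, (hξ.coord_ne_zero i).le_iff_lt]

lemma finite_halfOpenCone_univ (ξ : Fin d → ℝ) (σ : MaxCone d cones) :
    (hfan.halfOpenCone ξ σ Finset.univ).Finite :=
  (finite_setOf_coord_mem_Icc (hfan.coord σ) 0 1).subset fun _ hw =>
    ⟨fun i => (coord_mem_Icc_of_mem_box hw i).1, fun i => (coord_mem_Icc_of_mem_box hw i).2⟩

variable (hfan) in
/-- The lattice points of the half-open fundamental box of a full-dimensional cone. -/
noncomputable def box (ξ : Fin d → ℝ) (σ : MaxCone d cones) : Finset (Fin d → ℤ) :=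
  (finite_halfOpenCone_univ (hfan := hfan) ξ σ).toFinset

lemma mem_box : w ∈ hfan.box ξ σ ↔ w ∈ hfan.halfOpenCone ξ σ Finset.univ :=
  Set.Finite.mem_toFinset _

lemma sum_rays_sub_mem_box (hξ : IsGeneric v cones ξ) (hw : w ∈ hfan.box ξ σ) :
    ∑ i ∈ σ.1, v i - w ∈ hfan.box (-ξ) σ := by
  rw [mem_box, halfOpenCone, inwardFacets_neg hξ]
  refine sub_mem_box_compl ?_ (mem_box.1 hw)
  rw [← Finset.sum_coe_sort σ.1, map_sum]
  simp only [latticeCoord_ray]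
  exact Finset.univ_sum_single 1

end IsCompleteSimplicialFan

end Perturbation

section FanSeries

/-! ### The generating function of the fan -/

open LaurentPolynomial Polynomial

variable {d r : ℕ} {v : Fin r → Fin d → ℤ} {cones : Finset (Finset (Fin r))}
  {ξ : Fin d → ℝ} {f : (Fin d → ℝ) → ℝ} {K : (Fin d → ℤ) → ℕ}

theorem IsPiecewiseLinear.exists_nat_weight (hf : IsPiecewiseLinear v cones f)
    (hfan : IsCompleteSimplicialFan v cones) (hpos : ∀ i, 0 ≤ f (latticeVec (v i)))
    (hrat : ∀ i, ∃ q : ℚ, f (latticeVec (v i)) = q) :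
    ∃ N : ℕ, N ≠ 0 ∧ ∃ K : (Fin d → ℤ) → ℕ, ∀ w, (K w : ℝ) = N * f (latticeVec w) := by
  choose ℓ hℓ using fun σ : MaxCone d cones => hf σ.1 σ.2.1
  have hℓrat (σ : MaxCone d cones) (w : Fin d → ℤ) : ∃ q : ℚ, ℓ σ (latticeVec w) = q :=
    exists_ratCast_eq_of_linearIndependent (hfan.linearIndependent σ.1 σ.2.1)
      (by rw [Fintype.card_coe, σ.2.2])
      (fun i => by simpa only [← hℓ σ _ (latticeVec_mem_coneOf i.2)] using hrat i) w
  obtain ⟨N, hN, hNℓ⟩ := exists_nat_mul_linearMap_eq_intCast hℓrat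
  have hnat (w : Fin d → ℤ) : ∃ k : ℕ, (k : ℝ) = N * f (latticeVec w) := by
    obtain ⟨σ, hσ⟩ := hfan.exists_maxCone_mem w
    obtain ⟨z, hz⟩ := hNℓ σ w
    rw [← hℓ σ _ hσ] at hz
    have hz0 : 0 ≤ z := by
      exact_mod_cast hz ▸ mul_nonneg N.cast_nonneg (hf.nonneg hfan hpos (latticeVec w))
    lift z to ℕ using hz0
    exact ⟨z, by rw [hz, Int.cast_natCast]⟩
  choose K hK using hnat
  exact ⟨N, hN, K, hK⟩

/-- `K` is an integral weight of lattice points: additive on each cone of the fan and positive on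
the rays, being the restriction of a piecewise linear function. -/
structure IsFanWeight (v : Fin r → Fin d → ℤ) (cones : Finset (Finset (Fin r)))
    (K : (Fin d → ℤ) → ℕ) : Prop where
  exists_isPiecewiseLinear : ∃ f, IsPiecewiseLinear v cones f ∧ ∀ w, (K w : ℝ) = f (latticeVec w)
  pos : ∀ i, 0 < K (v i)

namespace IsFanWeight

lemma map_add (hK : IsFanWeight v cones K) {σ : Finset (Fin r)} (hσ : σ ∈ cones)
    {w w' : Fin d → ℤ} (hw : latticeVec w ∈ coneOf d r v σ)
    (hw' : latticeVec w' ∈ coneOf d r v σ) : K (w + w') = K w + K w' := by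
  obtain ⟨f, hf, hKf⟩ := hK.exists_isPiecewiseLinear
  have : (K (w + w') : ℝ) = K w + K w' := by
    rw [hKf, hKf, hKf, _root_.map_add, hf.map_add hσ hw hw']
  exact_mod_cast this

lemma map_sum_rays (hK : IsFanWeight v cones K) {σ : Finset (Fin r)} (hσ : σ ∈ cones) :
    K (∑ i ∈ σ, v i) = ∑ i ∈ σ, K (v i) := by
  obtain ⟨f, hf, hKf⟩ := hK.exists_isPiecewiseLinear
  have : (K (∑ i ∈ σ, v i) : ℝ) = ∑ i ∈ σ, (K (v i) : ℝ) := by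
    have hsum := hf.map_sum hσ (c := 1) fun _ => zero_le_one
    simp only [Pi.one_apply, one_smul, one_mul] at hsum
    simp only [hKf, _root_.map_sum, ← Finset.sum_coe_sort σ, hsum]
  exact_mod_cast this

lemma coord_le (hK : IsFanWeight v cones K) {hfan : IsCompleteSimplicialFan v cones}
    {σ : MaxCone d cones} {w : Fin d → ℤ} (hw : latticeVec w ∈ coneOf d r v σ.1) (i : σ.1) :
    hfan.coord σ (latticeVec w) i ≤ K w := by
  obtain ⟨f, hf, hKf⟩ := hK.exists_isPiecewiseLinear
  have hc := IsCompleteSimplicialFan.mem_coneOf_iff (hfan := hfan).1 hw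
  have hray (j : σ.1) : 1 ≤ f (latticeVec (v j)) := by
    rw [← hKf]
    exact_mod_cast hK.pos j
  calc hfan.coord σ (latticeVec w) i
      ≤ hfan.coord σ (latticeVec w) i * f (latticeVec (v i)) :=
        le_mul_of_one_le_right (hc i) (hray i)
    _ ≤ ∑ j, hfan.coord σ (latticeVec w) j * f (latticeVec (v j)) :=
        Finset.single_le_sum (fun j _ => mul_nonneg (hc j) (zero_le_one.trans (hray j)))
          (Finset.mem_univ i)
    _ = K w := by
        rw [hKf, ← hf.map_sum σ.2.1 hc, IsCompleteSimplicialFan.sum_coord_smul]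

lemma hasFiniteFibers_halfOpenCone (hK : IsFanWeight v cones K)
    {hfan : IsCompleteSimplicialFan v cones} (ξ : Fin d → ℝ) (σ : MaxCone d cones) :
    HasFiniteFibers K (hfan.halfOpenCone ξ σ ∅) := fun n => by
  refine (finite_setOf_coord_mem_Icc (hfan.coord σ) 0 fun _ => n).subset ?_
  rintro w ⟨hw, rfl⟩
  exact ⟨fun i => coord_nonneg_of_mem_truncatedCone hw i,
    fun i => hK.coord_le (IsCompleteSimplicialFan.mem_coneOf_of_mem_halfOpenCone hw) i⟩

lemma hasFiniteFibers_univ (hK : IsFanWeight v cones K) (hfan : IsCompleteSimplicialFan v cones) :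
    HasFiniteFibers K Set.univ := by
  obtain ⟨ξ, hξ⟩ := exists_isGeneric v cones
  rw [← hfan.iUnion_halfOpenCone hξ]
  exact .iUnion fun σ => hK.hasFiniteFibers_halfOpenCone ξ σ

end IsFanWeight

namespace IsCompleteSimplicialFan

variable (hfan : IsCompleteSimplicialFan v cones)

/-- The generating polynomial `∑ X ^ K x` of the fundamental box of a full-dimensional cone. -/
noncomputable def boxPolynomial (K : (Fin d → ℤ) → ℕ) (ξ : Fin d → ℝ) (σ : MaxCone d cones) :
    ℚ[X] := ∑ w ∈ hfan.box ξ σ, X ^ K w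

/-- The numerator of the generating function of `K` over the common denominator
`∏ i, (1 - X ^ K (v i))`. -/
noncomputable def numerator (K : (Fin d → ℤ) → ℕ) (ξ : Fin d → ℝ) : ℚ[X] :=
  ∑ σ : MaxCone d cones, hfan.boxPolynomial K ξ σ * ∏ i ∈ σ.1ᶜ, (1 - X ^ K (v i))

variable {hfan}

lemma weightSeries_halfOpenCone_mul_prod (hK : IsFanWeight v cones K) (ξ : Fin d → ℝ)
    (σ : MaxCone d cones) :
    weightSeries ℚ K (hfan.halfOpenCone ξ σ ∅) * ∏ i ∈ σ.1, (1 - PowerSeries.X ^ K (v i)) =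
      hfan.boxPolynomial K ξ σ := by
  have hbox : (hfan.halfOpenCone ξ σ Finset.univ) = (hfan.box ξ σ : Set (Fin d → ℤ)) :=
    (Set.Finite.coe_toFinset _).symm
  rw [← Finset.prod_coe_sort σ.1, halfOpenCone, weightSeries_truncatedCone_mul_prod
    (hK.hasFiniteFibers_halfOpenCone ξ σ) latticeCoord_ray fun w hw i => hK.map_add σ.2.1
      (mem_coneOf_of_mem_halfOpenCone hw) (latticeVec_mem_coneOf i.2), ← halfOpenCone, hbox,
    weightSeries_coe_finset, boxPolynomial]
  simp only [← coeToPowerSeries.ringHom_apply, map_sum, map_pow]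
  simp only [coeToPowerSeries.ringHom_apply, coe_X]

theorem weightSeries_mul_prod_eq_numerator (hK : IsFanWeight v cones K)
    (hξ : IsGeneric v cones ξ) :
    weightSeries ℚ K Set.univ * ((∏ i, (1 - X ^ K (v i)) : ℚ[X]) : PowerSeries ℚ) =
      hfan.numerator K ξ := by
  rw [← iUnion_halfOpenCone (hfan := hfan) hξ, weightSeries_iUnion
    (hK.hasFiniteFibers_halfOpenCone ξ) (pairwise_disjoint_halfOpenCone hξ), Finset.sum_mul,
    numerator, ← coeToPowerSeries.ringHom_apply (φ := ∑ _, _), map_sum]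
  refine Finset.sum_congr rfl fun σ _ => ?_
  rw [coeToPowerSeries.ringHom_apply, ← Finset.prod_mul_prod_compl σ.1, coe_mul, coe_mul,
    ← weightSeries_halfOpenCone_mul_prod hK, mul_assoc]
  congr 2
  simp only [← coeToPowerSeries.ringHom_apply, map_prod, map_sub, map_one, map_pow]
  simp only [coeToPowerSeries.ringHom_apply, coe_X]

lemma invert_boxPolynomial (hK : IsFanWeight v cones K) (hξ : IsGeneric v cones ξ)
    (σ : MaxCone d cones) :
    invert (toLaurent (hfan.boxPolynomial K ξ σ)) =
      T (-∑ i ∈ σ.1, (K (v i) : ℤ)) * toLaurent (hfan.boxPolynomial K (-ξ) σ) := by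
  rw [← Nat.cast_sum]
  refine invert_toLaurent_sum_X_pow _ (∑ i ∈ σ.1, v i - ·) (fun w hw => sum_rays_sub_mem_box hξ hw)
    (fun w hw => ?_) (sub_sub_cancel _) fun w hw => ?_
  · simpa only [neg_neg] using sum_rays_sub_mem_box hξ.neg hw
  · rw [← hK.map_add σ.2.1 (mem_coneOf_of_mem_halfOpenCone (mem_box.1 hw))
      (mem_coneOf_of_mem_halfOpenCone (mem_box.1 (sum_rays_sub_mem_box hξ hw))),
      add_sub_cancel, hK.map_sum_rays σ.2.1]

theorem invert_numerator (hK : IsFanWeight v cones K) (hξ : IsGeneric v cones ξ) :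
    invert (toLaurent (hfan.numerator K ξ)) =
      (-1) ^ (r + d) * T (-∑ i, (K (v i) : ℤ)) * toLaurent (hfan.numerator K (-ξ)) := by
  simp only [numerator, map_sum, map_mul, Finset.mul_sum]
  refine Finset.sum_congr rfl fun σ _ => ?_
  have hsign : (-1) ^ σ.1ᶜ.card = ((-1) ^ (r + d) : ℚ[T;T⁻¹]) := by
    have hd : d ≤ r := by simpa [σ.2.2] using Finset.card_le_univ σ.1
    rw [Finset.card_compl, Fintype.card_fin, σ.2.2, ← Nat.sub_add_cancel hd, add_assoc, pow_add,
      ← two_mul d, pow_mul]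
    simp
  rw [invert_boxPolynomial hK hξ, invert_toLaurent_prod_one_sub_X_pow, hsign,
    ← Finset.sum_add_sum_compl σ.1, neg_add, T_add]
  ring

theorem exists_numerator (hfan : IsCompleteSimplicialFan v cones) (hK : IsFanWeight v cones K) :
    ∃ P : ℚ[X], weightSeries ℚ K Set.univ * ((∏ i, (1 - X ^ K (v i)) : ℚ[X]) : PowerSeries ℚ) = P ∧
      invert (toLaurent P) = (-1) ^ (r + d) * T (-∑ i, (K (v i) : ℤ)) * toLaurent P := by
  obtain ⟨ξ, hξ⟩ := exists_isGeneric v cones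
  have hP := weightSeries_mul_prod_eq_numerator (hfan := hfan) hK hξ
  have hneg : hfan.numerator K (-ξ) = hfan.numerator K ξ :=
    coe_injective ℚ ((weightSeries_mul_prod_eq_numerator hK hξ.neg).symm.trans hP)
  exact ⟨hfan.numerator K ξ, hP, by rw [invert_numerator hK hξ, hneg]⟩

end IsCompleteSimplicialFan

end FanSeries

section DeltaSeries

/-! ### The weighted δ-series -/

open LaurentPolynomial Polynomial

variable {d r : ℕ} {v : Fin r → Fin d → ℤ} {cones : Finset (Finset (Fin r))}
  {ψ lam : (Fin d → ℝ) → ℝ}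

/-- Moves the apex of each vertical ray of lattice points from height `0` to height `⌈ψ w⌉`, the
least `m` with `w ∈ mQ`. -/
noncomputable def raiseByCeil (ψ : (Fin d → ℝ) → ℝ) (p : ℕ × (Fin d → ℤ)) : ℕ × (Fin d → ℤ) :=
  (p.1 + ⌈ψ (latticeVec p.2)⌉₊, p.2)

lemma raiseByCeil_injective (ψ : (Fin d → ℝ) → ℝ) : Function.Injective (raiseByCeil ψ) := by
  rintro ⟨k, w⟩ ⟨k', w'⟩ h
  obtain ⟨hk, rfl⟩ := Prod.ext_iff.1 h
  exact Prod.ext (Nat.add_right_cancel hk) rfl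

lemma image_raiseByCeil (hψ : ∀ x, 0 ≤ ψ x) (e : ℚ) :
    raiseByCeil ψ '' {p | ψ (latticeVec p.2) + lam (latticeVec p.2) + p.1 = e} =
      {p | ψ (latticeVec p.2) ≤ p.1 ∧
        ψ (latticeVec p.2) - ⌈ψ (latticeVec p.2)⌉ + lam (latticeVec p.2) + p.1 = e} := by
  ext ⟨m, w⟩
  have hceil := natCast_ceil_eq_intCast_ceil (hψ (latticeVec w))
  simp only [Set.mem_image, Set.mem_ofPred_eq, ← hceil]
  constructor
  · rintro ⟨⟨k, w⟩, hk, hkw⟩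
    obtain ⟨rfl, rfl⟩ : k + ⌈ψ (latticeVec w)⌉₊ = m ∧ w = _ := Prod.ext_iff.1 hkw
    refine ⟨(Nat.le_ceil _).trans (Nat.cast_le.2 (Nat.le_add_left _ _)), ?_⟩
    push_cast
    linarith only [hk]
  · rintro ⟨hle, hm⟩
    have hle' := Nat.ceil_le.2 hle
    exact ⟨(m - ⌈ψ (latticeVec w)⌉₊, w), by rw [Nat.cast_sub hle']; linarith,
      Prod.ext (Nat.sub_add_cancel hle') rfl⟩

lemma one_le_fst_iff_ne_zero (hfan : IsCompleteSimplicialFan v cones)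
    (hψ : IsPiecewiseLinear v cones ψ) (hψpos : ∀ i, 0 < ψ (latticeVec (v i)))
    {p : ℕ × (Fin d → ℤ)} (hp : ψ (latticeVec p.2) ≤ p.1) : 1 ≤ p.1 ↔ p ≠ 0 := by
  refine ⟨fun h1 h0 => by simp [h0] at h1, fun hne => ?_⟩
  by_contra! hlt
  have hp1 : p.1 = 0 := by omega
  rw [hp1, Nat.cast_zero] at hp
  have hp2 : latticeVec p.2 = 0 := hψ.eq_zero_of_map_eq_zero hfan hψpos
    (hp.antisymm (hψ.nonneg hfan (fun i => (hψpos i).le) _))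
  exact hne (Prod.ext hp1 (latticeVec_injective (hp2.trans (map_zero _).symm)))

theorem deltaCoeff_eq_ncard (hfan : IsCompleteSimplicialFan v cones)
    (hψ : IsPiecewiseLinear v cones ψ) (hlam : IsPiecewiseLinear v cones lam)
    (hψpos : ∀ i, 0 < ψ (latticeVec (v i))) {e : ℚ}
    (hfin : {p : ℕ × (Fin d → ℤ) |
      ψ (latticeVec p.2) + lam (latticeVec p.2) + p.1 = e}.Finite) :
    deltaCoeff d r v cones ψ lam e = {p : ℕ × (Fin d → ℤ) |
      ψ (latticeVec p.2) + lam (latticeVec p.2) + p.1 = e}.ncard := by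
  have himage := image_raiseByCeil (lam := lam) (hψ.nonneg hfan fun i => (hψpos i).le) e
  rw [← Set.ncard_image_of_injective _ (raiseByCeil_injective ψ), himage]
  replace hfin := himage ▸ hfin.image (raiseByCeil ψ)
  set S := {p : ℕ × (Fin d → ℤ) | ψ (latticeVec p.2) ≤ p.1 ∧
    ψ (latticeVec p.2) - ⌈ψ (latticeVec p.2)⌉ + lam (latticeVec p.2) + p.1 = e}
  have hzero : 0 ∈ S ↔ e = 0 := by
    simp [S, hψ.map_zero hfan, hlam.map_zero hfan, eq_comm (a := (0 : ℝ))]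
  have hpositive (p : ℕ × (Fin d → ℤ)) : p ∈ S \ {0} ↔ p ∈ S ∧ 1 ≤ p.1 :=
    and_congr_right fun hp => (one_le_fst_iff_ne_zero hfan hψ hψpos hp.1).symm
  have hS : {p : ℕ × (Fin d → ℤ) | 1 ≤ p.1 ∧
      (∃ σ ∈ cones, latticeVec p.2 ∈ coneOf d r v σ) ∧ ψ (latticeVec p.2) ≤ p.1 ∧
      ψ (latticeVec p.2) - ⌈ψ (latticeVec p.2)⌉ + lam (latticeVec p.2) + p.1 = e} = S \ {0} := by
    ext p
    rw [hpositive]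
    exact ⟨fun h => ⟨h.2.2, h.1⟩, fun h => ⟨h.2, hfan.exists_mem _, h.1⟩⟩
  unfold deltaCoeff
  simp only [← latticeVec_apply, hS]
  split_ifs with he
  · rw [← Set.ncard_sdiff_singleton_add_one (hzero.2 he) hfin]
    push_cast
    ring
  · rw [Set.sdiff_singleton_eq_self (hzero.not.2 he), zero_add]

theorem mkHahn_deltaCoeff {N : ℕ} [NeZero N] {K : (Fin d → ℤ) → ℕ}
    (hfan : IsCompleteSimplicialFan v cones)
    (hψ : IsPiecewiseLinear v cones ψ) (hlam : IsPiecewiseLinear v cones lam)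
    (hψpos : ∀ i, 0 < ψ (latticeVec (v i)))
    (hK : ∀ w, (K w : ℝ) = N * (ψ (latticeVec w) + lam (latticeVec w)))
    (hfib : HasFiniteFibers K Set.univ) :
    mkHahn (deltaCoeff d r v cones ψ lam) =
      hahnSubst ℚ N (weightSeries ℚ (fun p : ℕ × (Fin d → ℤ) => p.1 * N + K p.2) Set.univ) := by
  have hN : (N : ℝ) ≠ 0 := NeZero.ne _
  have hiff (p : ℕ × (Fin d → ℤ)) (e : ℚ) : ((p.1 * N + K p.2 : ℕ) : ℚ) = e * N ↔
      ψ (latticeVec p.2) + lam (latticeVec p.2) + p.1 = e := by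
    rw [← Rat.cast_inj (α := ℝ)]
    conv_rhs => rw [← mul_left_inj' hN]
    push_cast
    rw [hK]
    constructor <;> intro h <;> linear_combination h
  rw [← mkHahn_coeff (hahnSubst _ _ _)]
  congr 1
  ext e
  rw [coeff_hahnSubst_weightSeries, deltaCoeff_eq_ncard hfan hψ hlam hψpos]
  · simp only [hiff, Set.mem_univ, true_and]
  · simp only [← hiff]
    simpa only [Set.mem_univ, true_and] using
      (hasFiniteFibers_prod (NeZero.ne N) hfib).finite_setOf_natCast_eq (e * N)

theorem polyToHahn_mul_deltaSeries {N : ℕ} [NeZero N] {K : (Fin d → ℤ) → ℕ}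
    (hfan : IsCompleteSimplicialFan v cones)
    (hψ : IsPiecewiseLinear v cones ψ) (hlam : IsPiecewiseLinear v cones lam)
    (hψpos : ∀ i, 0 < ψ (latticeVec (v i)))
    (hK : ∀ w, (K w : ℝ) = N * (ψ (latticeVec w) + lam (latticeVec w)))
    (hfib : HasFiniteFibers K Set.univ) {P Q : ℚ[X]}
    (hP : weightSeries ℚ K Set.univ * (Q : PowerSeries ℚ) = P) :
    polyToHahn N Q * ((1 - tpow 1) ^ (d + 1) * mkHahn (deltaCoeff d r v cones ψ lam)) =
      polyToHahn N ((1 - X ^ N) ^ d * P) := by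
  have hW := weightSeries_prod_mul_one_sub_X_pow (R := ℚ) K
    (hasFiniteFibers_prod (NeZero.ne N) hfib)
  rw [mkHahn_deltaCoeff hfan hψ hlam hψpos hK hfib, ← hahnSubst_X_pow_self (N := N),
    ← map_one (hahnSubst ℚ N), ← map_sub, ← map_pow, ← map_mul, ← hahnSubst_coe_polynomial,
    ← hahnSubst_coe_polynomial, ← map_mul]
  refine congrArg _ ?_
  simp only [coe_mul, coe_pow, coe_sub, coe_one, coe_X, ← hP, ← hW]
  ring

end DeltaSeries

theorem stmt_8_general {d r : ℕ} {v : Fin r → Fin d → ℤ} {cones : Finset (Finset (Fin r))}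
    {ψ lam : (Fin d → ℝ) → ℝ} (hfan : IsCompleteSimplicialFan v cones)
    (hψ : IsPiecewiseLinear v cones ψ) (hlam : IsPiecewiseLinear v cones lam)
    (hψpos : ∀ i, 0 < ψ (latticeVec (v i)))
    (hpos : ∀ i, 0 < ψ (latticeVec (v i)) + lam (latticeVec (v i)))
    (hrat : ∀ i, ∃ c : ℚ, ψ (latticeVec (v i)) + lam (latticeVec (v i)) = c) :
    ∃ (N : ℕ) (p q : Polynomial ℚ), 0 < N ∧ q ≠ 0 ∧
      polyToHahn N q * ((1 - tpow 1) ^ (d + 1) * mkHahn (deltaCoeff d r v cones ψ lam))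
        = polyToHahn N p ∧
      Polynomial.X ^ (q.natDegree + d * N) * p.reverse * q
        = Polynomial.X ^ p.natDegree * p * q.reverse := by
  have hf := hψ.add hlam
  obtain ⟨N, hN, K, hK⟩ := hf.exists_nat_weight hfan (fun i => (hpos i).le) hrat
  have : NeZero N := ⟨hN⟩
  have hKpos (i : Fin r) : 0 < K (v i) := by
    have : (0 : ℝ) < K (v i) := hK (v i) ▸ mul_pos (by positivity) (hpos i)
    exact_mod_cast this
  have hweight : IsFanWeight v cones K := ⟨⟨_, hf.const_mul N, hK⟩, hKpos⟩
  obtain ⟨P, hP, hPinvert⟩ := hfan.exists_numerator hweight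
  let Q : Polynomial ℚ := ∏ i, (1 - .X ^ K (v i))
  have hQ : Q ≠ 0 := Finset.prod_ne_zero_iff.2 fun i _ => one_sub_X_pow_ne_zero (hKpos i).ne'
  have hQinvert := invert_toLaurent_prod_one_sub_X_pow (R := ℚ) Finset.univ fun i => K (v i)
  rw [Finset.card_univ, Fintype.card_fin] at hQinvert
  exact ⟨N, _, Q, NeZero.pos N, hQ,
    polyToHahn_mul_deltaSeries hfan hψ hlam hψpos hK (hweight.hasFiniteFibers_univ hfan) hP,
    X_pow_mul_reverse_mul_of_invert_eq hPinvert hQinvert N⟩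

/-- For a complete simplicial rational fan `Σ` and `λ` piecewise `ℚ`-linear
with `λ(b_i) > -1`, the weighted δ-vector
`δ^λ(t) = (1-t)^{d+1}(1 + ∑_{m≥1} ∑_{v ∈ mQ∩N} t^{ψ(v)-⌈ψ(v)⌉+λ(v)+m})` is a rational
function in `ℚ(t^{1/N})` for some `N > 0` (i.e. `δ^λ = p(t^{1/N})/q(t^{1/N})`), and satisfies
the symmetry `δ^λ(t) = t^d δ^λ(t⁻¹)` (expressed in terms of reversed polynomials). -/
theorem stmt_8 (d r : ℕ) (v : Fin r → Fin d → ℤ)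
    (cones : Finset (Finset (Fin r)))
    (hdown : ∀ σ ∈ cones, ∀ τ ⊆ σ, τ ∈ cones)
    (hindep : ∀ σ ∈ cones, LinearIndependent ℝ (fun i : σ => fun j => (v i j : ℝ)))
    (hfan : ∀ σ ∈ cones, ∀ τ ∈ cones,
      coneOf d r v σ ∩ coneOf d r v τ = coneOf d r v (σ ∩ τ))
    (hcomplete : ∀ x : Fin d → ℝ, ∃ σ ∈ cones, x ∈ coneOf d r v σ)
    (hprim : ∀ i, Finset.univ.gcd (v i) = 1)
    (a : Fin r → ℕ) (ha : ∀ i, 0 < a i)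
    (ψ lam : (Fin d → ℝ) → ℝ)
    (hψlin : ∀ σ ∈ cones, ∃ ℓ : (Fin d → ℝ) →ₗ[ℝ] ℝ, ∀ x ∈ coneOf d r v σ, ψ x = ℓ x)
    (hψb : ∀ i, ψ (fun j => (a i : ℝ) * (v i j : ℝ)) = 1)
    (hlamlin : ∀ σ ∈ cones, ∃ ℓ : (Fin d → ℝ) →ₗ[ℝ] ℝ, ∀ x ∈ coneOf d r v σ, lam x = ℓ x)
    (hlamb : ∀ i, -1 < lam (fun j => (a i : ℝ) * (v i j : ℝ)))
    -- `ψ` and `λ` take rational values on lattice points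
    (hrat : ∀ w : Fin d → ℤ, ∃ c : ℚ,
      ψ (fun j => (w j : ℝ)) + lam (fun j => (w j : ℝ)) = (c : ℝ)) :
    ∃ (N : ℕ) (p q : Polynomial ℚ), 0 < N ∧ q ≠ 0 ∧
      polyToHahn N q * ((1 - tpow 1) ^ (d + 1) * mkHahn (deltaCoeff d r v cones ψ lam))
        = polyToHahn N p ∧
      Polynomial.X ^ (q.natDegree + d * N) * p.reverse * q
        = Polynomial.X ^ p.natDegree * p * q.reverse := by
  have hΔ : IsCompleteSimplicialFan v cones := ⟨hdown, hindep, hfan, hcomplete⟩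
  have hψ_ray (i : Fin r) : a i * ψ (latticeVec (v i)) = 1 :=
    (IsPiecewiseLinear.map_smul_of_nonneg hψlin hΔ (a i).cast_nonneg _).symm.trans (hψb i)
  have hlam_ray (i : Fin r) : -1 < a i * lam (latticeVec (v i)) :=
    (hlamb i).trans_eq (IsPiecewiseLinear.map_smul_of_nonneg hlamlin hΔ (a i).cast_nonneg _)
  refine stmt_8_general hΔ hψlin hlamlin (fun i => ?_) (fun i => ?_) fun i => hrat (v i)
  · exact pos_of_mul_pos_right (hψ_ray i ▸ zero_lt_one) (a i).cast_nonneg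
  · refine pos_of_mul_pos_right (b := ψ _ + lam _) ?_ (a i).cast_nonneg
    linarith [hψ_ray i, hlam_ray i]
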